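/- Fix integers 0 ≤ q < d. Let P be a stationary and ergodic probability measure on Ω = [0,1]^{K^d} such that the marginal distribution function F^Q(t) = P(ω_Q ≤ t) is continuous in t ∈ [0,1] for every Q ∈ K^d. Then the sequence of functions t ↦ |Λ_n|^{−1} E[β_q^n(t)] converges uniformly on [0,1] to β̂_q(t) as n → ∞, where β̂_q(t) := limsup_{n→∞} |Λ_n|^{−1} E[β_q^n(t)]. -/

import Mathlib

open MeasureTheory Filter Topology

noncomputable section

/-- An elementary cube in `ℝ^d`: the `i`-th component is the elementary interval
`[l, l+1]` if the Boolean is `true` (nondegenerate) and `[l, l]` if `false` (degenerate). -/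
abbrev ElemCube (d : ℕ) := Fin d → ℤ × Bool

/-- The dimension of an elementary cube: the number of nondegenerate components. -/
def cubeDim {d : ℕ} (Q : ElemCube d) : ℕ :=
  (Finset.univ.filter fun i => (Q i).2 = true).card

/-- The geometric realization of an elementary cube as a subset of `ℝ^d`. -/
def cubeSet {d : ℕ} (Q : ElemCube d) : Set (Fin d → ℝ) :=
  {x | ∀ i, x i ∈ Set.Icc ((Q i).1 : ℝ) ((Q i).1 + (if (Q i).2 then 1 else 0))}

/-- A cubical set is a union of elementary cubes. -/
def IsCubical {d : ℕ} (X : Set (Fin d → ℝ)) : Prop :=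
  ∃ S : Set (ElemCube d), X = ⋃ Q ∈ S, cubeSet Q

/-- The free `ℤ`-module generated by all elementary cubes of `ℝ^d` (all dimensions mixed). -/
abbrev CubChain (d : ℕ) := ElemCube d →₀ ℤ

/-- The cubical boundary of a single elementary cube, defined by induction on the ambient
dimension, following the inductive definition: in `ℝ¹`, `∂ [l,l+1]^ = [l+1]^ - [l]^` and
`∂ Q̂ = 0` for degenerate `Q`; and for `Q = I × P`,
`∂ Q̂ = (∂ Î) ⋄ P̂ + (-1)^(dim I) Î ⋄ (∂ P̂)`, where `⋄` is the cubical product. -/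
def boundaryCube : (d : ℕ) → ElemCube d → CubChain d
  | 0, _ => 0
  | d + 1, Q =>
      (if (Q 0).2 then
          Finsupp.single (Fin.cons ((Q 0).1 + 1, false) (fun i => Q i.succ)) (1 : ℤ)
            - Finsupp.single (Fin.cons ((Q 0).1, false) (fun i => Q i.succ)) (1 : ℤ)
        else 0)
      + (if (Q 0).2 then (-1 : ℤ) else 1) •
          (boundaryCube d (fun i => Q i.succ)).sum
            (fun R n => Finsupp.single (Fin.cons (Q 0) R) n)

/-- The cubical boundary operator, the `ℤ`-linear extension of `boundaryCube`. -/
def boundaryHom (d : ℕ) : CubChain d →ₗ[ℤ] CubChain d :=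
  Finsupp.lsum ℤ fun Q => LinearMap.toSpanSingleton ℤ (CubChain d) (boundaryCube d Q)

/-- `C_k^d(X)`: the submodule of chains supported on the `k`-dimensional elementary cubes
contained in `X`. -/
def chainsOn (d k : ℕ) (X : Set (Fin d → ℝ)) : Submodule ℤ (CubChain d) :=
  Finsupp.supported ℤ ℤ {Q : ElemCube d | cubeDim Q = k ∧ cubeSet Q ⊆ X}

/-- `Z_q(X) = ker ∂_q^X`, the cycles of the cubical set `X` in degree `q`. -/
def cycleMod (d q : ℕ) (X : Set (Fin d → ℝ)) : Submodule ℤ (CubChain d) :=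
  chainsOn d q X ⊓ LinearMap.ker (boundaryHom d)

/-- `B_q(X) = im ∂_{q+1}^X`, the boundaries of the cubical set `X` in degree `q`. -/
def boundaryMod (d q : ℕ) (X : Set (Fin d → ℝ)) : Submodule ℤ (CubChain d) :=
  Submodule.map (boundaryHom d) (chainsOn d (q + 1) X)

/-- The `q`-th Betti number of a cubical set: the rank of the free part of the `q`-th
cubical homology `H_q(X) = Z_q(X) / B_q(X)`. -/
def betti (d q : ℕ) (X : Set (Fin d → ℝ)) : ℕ :=
  Module.finrank ℤ
    (↥(cycleMod d q X) ⧸ (boundaryMod d q X).comap (cycleMod d q X).subtype)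

/-- `Λ_n = [-n, n]^d ⊆ ℝ^d`. -/
def lambda (d n : ℕ) : Set (Fin d → ℝ) := {x | ∀ i, x i ∈ Set.Icc (-(n : ℝ)) n}

/-- The configuration space `Ω = [0,1]^{K^d}` with the product σ-field. -/
abbrev Config (d : ℕ) := ElemCube d → unitInterval

/-- Translation of an elementary cube by `x ∈ ℤ^d`. -/
def translateCube {d : ℕ} (x : Fin d → ℤ) (Q : ElemCube d) : ElemCube d :=
  fun i => ((Q i).1 + x i, (Q i).2)

/-- The translation action `τ_x` on configurations: `(τ_x ω)_Q = ω_{-x+Q}`. -/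
def configShift {d : ℕ} (x : Fin d → ℤ) (ω : Config d) : Config d :=
  fun Q => ω (translateCube (-x) Q)

/-- Stationarity of a measure on configuration space: `P(τ_x⁻¹ A) = P(A)`. -/
def Stationary {d : ℕ} (P : Measure (Config d)) : Prop :=
  ∀ (x : Fin d → ℤ) (A : Set (Config d)), MeasurableSet A → P (configShift x ⁻¹' A) = P A

/-- Ergodicity of a measure on configuration space under translations. -/
def ErgodicConfig {d : ℕ} (P : Measure (Config d)) : Prop :=
  ∀ A : Set (Config d), MeasurableSet A →
    (∀ x : Fin d → ℤ, configShift x ⁻¹' A = A) → P A = 0 ∨ P A = 1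

/-- The random cubical set `X(t) = ⋃ {Q ∈ K^d : ω_Q ≤ t}`. -/
def cubSet {d : ℕ} (ω : Config d) (t : ℝ) : Set (Fin d → ℝ) :=
  ⋃ Q ∈ {Q : ElemCube d | (ω Q : ℝ) ≤ t}, cubeSet Q

/-- `β_q^n(t)(ω) = β_q(X(t) ∩ Λ_n)`. -/
def bettiN (d q n : ℕ) (t : ℝ) (ω : Config d) : ℕ :=
  betti d q (cubSet ω t ∩ lambda d n)

/-- `β̂_q(t) := limsup_{n → ∞} |Λ_n|⁻¹ E[β_q^n(t)]`, where `|Λ_n| = (2n)^d`. -/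
def betaHat (d q : ℕ) (P : Measure (Config d)) (t : ℝ) : ℝ :=
  limsup (fun n : ℕ => ((2 * (n : ℝ)) ^ d)⁻¹ * ∫ ω, (bettiN d q n t ω : ℝ) ∂P) atTop

/-!
Two properties of Betti numbers make the expectations `E[β_q^n(t)]` almost additive in the box.
First, adding cubes to a cubical set changes `β_q` by at most the number of cubes added, since
both the cycles and the boundaries gain at most that much rank. Second, `β_q` is additive over
separated pieces and invariant under lattice translations. Now fill `Λ_n` with `(2 N + 1) ^ d`
disjoint lattice translates of `Λ_m`, placed one unit apart. By stationarity all of them have the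
same expected Betti number, so `E[β_q^n(t)]` differs from `(2 N + 1) ^ d * E[β_q^m(t)]` by at most
the number of elementary cubes of `Λ_n` not covered, namely
`(4 n + 1) ^ d - ((2 N + 1) * (4 m + 1)) ^ d`. Divided by `|Λ_n|` this tends to
`2 ^ d - ((4 m + 1) / (2 m + 1)) ^ d` as `n → ∞`, which tends to `0` as `m → ∞`. No term depends
on `t`, so the normalized expectations are uniformly Cauchy in `t`.
-/

section RelativeRank

variable {R M N : Type*} [CommRing R] [AddCommGroup M] [Module R M] [AddCommGroup N] [Module R N]

/-- The rank of `Z / (Z ∩ B)`. For `Z` the cycles and `B` the boundaries of a chain complex in some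
degree this is the Betti number; intersecting with `Z` avoids an appeal to `∂² = 0`. -/
def relRank (Z B : Submodule R M) : ℕ :=
  Module.finrank R (Z ⧸ B.submoduleOf Z)

lemma finite_of_le [IsNoetherianRing R] {A B : Submodule R M} [Module.Finite R B]
    (h : A ≤ B) : Module.Finite R A :=
  Module.Finite.of_injective (Submodule.inclusion h) (Submodule.inclusion_injective h)

lemma relRank_map_of_injective {f : M →ₗ[R] N} (hf : Function.Injective f)
    (Z B : Submodule R M) : relRank (Z.map f) (B.map f) = relRank Z B := by
  refine (Submodule.Quotient.equiv (B.submoduleOf Z) ((B.map f).submoduleOf (Z.map f))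
    (Submodule.equivMapOfInjective f hf Z) ?_).finrank_eq.symm
  ext ⟨y, hy⟩
  obtain ⟨z, hz, rfl⟩ := hy
  simp only [Submodule.mem_map, Submodule.submoduleOf, Submodule.mem_comap,
    Submodule.subtype_apply, LinearEquiv.coe_coe, Subtype.exists, Subtype.ext_iff,
    Submodule.coe_equivMapOfInjective_apply]
  exact ⟨fun ⟨b, _, hb, hbz⟩ => ⟨b, hb, hbz⟩,
    fun ⟨b, hb, hbz⟩ => ⟨b, hf hbz ▸ hz, hb, hbz⟩⟩

lemma map_inf_ker_eq_of_comp_eq {f : M →ₗ[R] M} {g : M →ₗ[R] M} (hf : Function.Injective f)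
    (hfg : g ∘ₗ f = f ∘ₗ g) (A : Submodule R M) :
    A.map f ⊓ LinearMap.ker g = (A ⊓ LinearMap.ker g).map f := by
  rw [Submodule.map_inf_eq_map_inf_comap, ← LinearMap.ker_comp, hfg,
    LinearMap.ker_comp_of_ker_eq_bot _ (LinearMap.ker_eq_bot.2 hf)]

lemma sup_inf_ker_of_disjoint {f : M →ₗ[R] M} {A A' K K' : Submodule R M} (hA : A ≤ K)
    (hA' : A' ≤ K') (hK : K ≤ K.comap f) (hK' : K' ≤ K'.comap f) (hKK' : Disjoint K K') :
    (A ⊔ A') ⊓ LinearMap.ker f = (A ⊓ LinearMap.ker f) ⊔ (A' ⊓ LinearMap.ker f) := by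
  refine le_antisymm ?_ (sup_le (inf_le_inf_right _ le_sup_left) (inf_le_inf_right _ le_sup_right))
  rintro x ⟨hx, hfx⟩
  obtain ⟨a, ha, a', ha', rfl⟩ := Submodule.mem_sup.1 hx
  have hsum : f a = -f a' := eq_neg_of_add_eq_zero_left (by simpa using hfx)
  have hfa : f a = 0 :=
    Submodule.disjoint_def.1 hKK' _ (hK (hA ha)) (hsum ▸ K'.neg_mem (hK' (hA' ha')))
  have hfa' : f a' = 0 := by simpa [hfa] using hsum
  exact Submodule.add_mem_sup ⟨ha, hfa⟩ ⟨ha', hfa'⟩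

variable [IsDomain R]

lemma finrank_sup_add_finrank_inf (A B : Submodule R M) [Module.Finite R A] [Module.Finite R B]
    [Module.Finite R (A ⊓ B : Submodule R M)] :
    Module.finrank R (A ⊔ B : Submodule R M) + Module.finrank R (A ⊓ B : Submodule R M) =
      Module.finrank R A + Module.finrank R B := by
  have h := Submodule.rank_sup_add_rank_inf_eq A B
  simp only [← Module.finrank_eq_rank] at h
  exact_mod_cast h

lemma finrank_sup_of_disjoint {A B : Submodule R M} [Module.Finite R A] [Module.Finite R B]
    (h : Disjoint A B) :
    Module.finrank R (A ⊔ B : Submodule R M) = Module.finrank R A + Module.finrank R B := by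
  have : Module.Finite R (A ⊓ B : Submodule R M) := by rw [h.eq_bot]; infer_instance
  rw [← finrank_sup_add_finrank_inf A B, h.eq_bot, finrank_bot, add_zero]

lemma relRank_add_finrank_inf (Z B : Submodule R M) [Module.Finite R Z] :
    relRank Z B + Module.finrank R (Z ⊓ B : Submodule R M) = Module.finrank R Z := by
  rw [← Submodule.finrank_quotient_add_finrank (B.submoduleOf Z), ← Submodule.map_comap_subtype,
    Submodule.finrank_map_subtype_eq]
  rfl

variable [IsNoetherianRing R]

lemma relRank_add_finrank (Z B : Submodule R M) [Module.Finite R Z] [Module.Finite R B] :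
    relRank Z B + Module.finrank R B = Module.finrank R (Z ⊔ B : Submodule R M) := by
  have : Module.Finite R (Z ⊓ B : Submodule R M) := finite_of_le inf_le_left
  have h := finrank_sup_add_finrank_inf Z B
  have h' := relRank_add_finrank_inf Z B
  omega

lemma relRank_sup_sup_of_disjoint {Z B Z' B' : Submodule R M} [Module.Finite R Z]
    [Module.Finite R B] [Module.Finite R Z'] [Module.Finite R B']
    (h : Disjoint (Z ⊔ B) (Z' ⊔ B')) :
    relRank (Z ⊔ Z') (B ⊔ B') = relRank Z B + relRank Z' B' := by
  have hsup := relRank_add_finrank (Z ⊔ Z') (B ⊔ B')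
  rw [sup_sup_sup_comm, finrank_sup_of_disjoint h, ← relRank_add_finrank Z B,
    ← relRank_add_finrank Z' B', finrank_sup_of_disjoint (h.mono le_sup_right le_sup_right)] at hsup
  omega

-- The upper bound compares `rank Z - rank (Z ⊓ B)`, the lower one `rank (Z ⊔ B) - rank B`.
lemma abs_relRank_sub_relRank_le {Z B Z' B' : Submodule R M} [Module.Finite R Z']
    [Module.Finite R B'] {c : ℕ} (hZ : Z ≤ Z') (hB : B ≤ B')
    (hZc : Module.finrank R Z' ≤ Module.finrank R Z + c)
    (hBc : Module.finrank R B' ≤ Module.finrank R B + c) :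
    |(relRank Z' B' : ℤ) - relRank Z B| ≤ c := by
  have : Module.Finite R Z := finite_of_le hZ
  have : Module.Finite R B := finite_of_le hB
  have : Module.Finite R (Z' ⊓ B' : Submodule R M) := finite_of_le inf_le_left
  have hinf := Submodule.finrank_mono (inf_le_inf hZ hB)
  have hsup := Submodule.finrank_mono (sup_le_sup hZ hB)
  have := relRank_add_finrank_inf Z B
  have := relRank_add_finrank_inf Z' B'
  have := relRank_add_finrank Z B
  have := relRank_add_finrank Z' B'
  rw [abs_le]
  omega

end RelativeRank

section Supported

variable {R N ι : Type*} [CommRing R] [AddCommGroup N] [Module R N]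

lemma finite_supported {S : Set ι} (hS : S.Finite) :
    Module.Finite R (Finsupp.supported R R S) := by
  have := hS.to_subtype
  exact Module.Finite.equiv (Finsupp.supportedEquivFinsupp S).symm

lemma finrank_supported [Nontrivial R] {S : Set ι} (hS : S.Finite) :
    Module.finrank R (Finsupp.supported R R S) = S.ncard := by
  have := hS.fintype
  rw [(Finsupp.supportedEquivFinsupp S).finrank_eq, Module.finrank_finsupp_self,
    Set.ncard_eq_toFinset_card', Set.toFinset_card]

variable [IsDomain R] [IsNoetherianRing R]

lemma finrank_map_supported_le (f : (ι →₀ R) →ₗ[R] N) {S T : Set ι} (hST : S ⊆ T)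
    (hT : T.Finite) :
    Module.finrank R ((Finsupp.supported R R T).map f) ≤
      Module.finrank R ((Finsupp.supported R R S).map f) + (T \ S).ncard := by
  have := finite_supported (R := R) (hT.subset hST)
  have := finite_supported (R := R) (hT.sdiff (t := S))
  have : Module.Finite R ((Finsupp.supported R R S).map f ⊓
    (Finsupp.supported R R (T \ S)).map f : Submodule R N) := finite_of_le inf_le_left
  have hsup := finrank_sup_add_finrank_inf ((Finsupp.supported R R S).map f)
    ((Finsupp.supported R R (T \ S)).map f)
  rw [← Submodule.map_sup, ← Finsupp.supported_union, Set.union_sdiff_cancel hST] at hsup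
  have hle := Submodule.finrank_map_le f (Finsupp.supported R R (T \ S))
  rw [finrank_supported hT.sdiff] at hle
  omega

lemma finrank_supported_inf_le (A : Submodule R (ι →₀ R)) {S T : Set ι} (hST : S ⊆ T)
    (hT : T.Finite) :
    Module.finrank R (Finsupp.supported R R T ⊓ A : Submodule R (ι →₀ R)) ≤
      Module.finrank R (Finsupp.supported R R S ⊓ A : Submodule R (ι →₀ R)) + (T \ S).ncard := by
  set AT := Finsupp.supported R R T ⊓ A with hAT
  have := finite_supported (R := R) hT
  have : Module.Finite R AT := finite_of_le inf_le_left
  have hinf : AT ⊓ Finsupp.supported R R S = Finsupp.supported R R S ⊓ A := by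
    rw [hAT, inf_right_comm, inf_eq_right.2 (Finsupp.supported_mono hST)]
  have := finite_supported (R := R) (hT.subset hST)
  have : Module.Finite R (AT ⊓ Finsupp.supported R R S : Submodule R (ι →₀ R)) :=
    finite_of_le inf_le_left
  have hsup := finrank_sup_add_finrank_inf AT (Finsupp.supported R R S)
  have hle := Submodule.finrank_mono
    (sup_le inf_le_left (Finsupp.supported_mono hST) : AT ⊔ Finsupp.supported R R S ≤ _)
  rw [hinf, finrank_supported (hT.subset hST)] at hsup
  rw [finrank_supported hT] at hle
  have := Set.ncard_sdiff_add_ncard_of_subset hST hT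
  omega

end Supported

section ElementaryCubes

variable {d : ℕ}

/-- The vertex of `Q` with the smallest coordinates. -/
def lowerCorner (Q : ElemCube d) (i : Fin d) : ℤ := (Q i).1

/-- The vertex of `Q` with the largest coordinates. -/
def upperCorner (Q : ElemCube d) (i : Fin d) : ℤ := (Q i).1 + if (Q i).2 then 1 else 0

lemma lowerCorner_le_upperCorner (Q : ElemCube d) : lowerCorner Q ≤ upperCorner Q := by
  intro i
  change (Q i).1 ≤ (Q i).1 + if (Q i).2 then 1 else 0
  split_ifs <;> omega

lemma upperCorner_le_lowerCorner_add_one (Q : ElemCube d) : upperCorner Q ≤ lowerCorner Q + 1 := by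
  intro i
  simp only [lowerCorner, upperCorner, Pi.add_apply, Pi.one_apply]
  split_ifs <;> omega

lemma cubeSet_eq_Icc (Q : ElemCube d) :
    cubeSet Q = Set.Icc (Int.cast ∘ lowerCorner Q) (Int.cast ∘ upperCorner Q) := by
  ext y
  simp [cubeSet, lowerCorner, upperCorner, Pi.le_def, forall_and, apply_ite (Int.cast (R := ℝ))]

lemma lambda_eq_Icc (n : ℕ) :
    lambda d n = Set.Icc (Int.cast ∘ fun _ => -(n : ℤ)) (Int.cast ∘ fun _ => (n : ℤ)) := by
  ext y
  simp [lambda, Pi.le_def, forall_and]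

lemma intCast_comp_le_intCast_comp_iff {a b : Fin d → ℤ} :
    (Int.cast ∘ a : Fin d → ℝ) ≤ Int.cast ∘ b ↔ a ≤ b := by
  simp [Pi.le_def]

lemma cubeSet_subset_Icc_iff {Q : ElemCube d} {a b : Fin d → ℤ} :
    cubeSet Q ⊆ Set.Icc (Int.cast ∘ a) (Int.cast ∘ b) ↔ a ≤ lowerCorner Q ∧ upperCorner Q ≤ b := by
  rw [cubeSet_eq_Icc, Set.Icc_subset_Icc_iff
    (intCast_comp_le_intCast_comp_iff.2 (lowerCorner_le_upperCorner Q)),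
    intCast_comp_le_intCast_comp_iff, intCast_comp_le_intCast_comp_iff]

lemma cubeSet_subset_cubeSet_iff {R Q : ElemCube d} :
    cubeSet R ⊆ cubeSet Q ↔ lowerCorner Q ≤ lowerCorner R ∧ upperCorner R ≤ upperCorner Q := by
  rw [cubeSet_eq_Icc Q, cubeSet_subset_Icc_iff]

lemma cubeSet_nonempty (Q : ElemCube d) : (cubeSet Q).Nonempty := by
  rw [cubeSet_eq_Icc, Set.nonempty_Icc, intCast_comp_le_intCast_comp_iff]
  exact lowerCorner_le_upperCorner Q

lemma isPreconnected_cubeSet (Q : ElemCube d) : IsPreconnected (cubeSet Q) := by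
  rw [cubeSet_eq_Icc]
  exact (convex_Icc _ _).isPreconnected

/-- The centre of `Q`; it lies in the relative interior of `Q`, hence in no smaller face. -/
def cubeCenter (Q : ElemCube d) (i : Fin d) : ℝ := (lowerCorner Q i + upperCorner Q i) / 2

lemma cubeCenter_mem (Q : ElemCube d) : cubeCenter Q ∈ cubeSet Q := by
  have h i : (lowerCorner Q i : ℝ) ≤ upperCorner Q i :=
    Int.cast_le.2 (lowerCorner_le_upperCorner Q i)
  rw [cubeSet_eq_Icc]
  constructor <;> intro i <;> dsimp [cubeCenter] <;> linarith [h i]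

lemma cubeSet_subset_of_cubeCenter_mem {R Q : ElemCube d} (h : cubeCenter R ∈ cubeSet Q) :
    cubeSet R ⊆ cubeSet Q := by
  rw [cubeSet_eq_Icc, Set.mem_Icc, Pi.le_def, Pi.le_def] at h
  have hint i : 2 * lowerCorner Q i ≤ lowerCorner R i + upperCorner R i ∧
      lowerCorner R i + upperCorner R i ≤ 2 * upperCorner Q i := by
    have h₁ := h.1 i
    have h₂ := h.2 i
    simp only [Function.comp_apply, cubeCenter] at h₁ h₂
    constructor <;> rify <;> linarith
  have hlen i : upperCorner R i ≤ lowerCorner R i + 1 := upperCorner_le_lowerCorner_add_one R i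
  have hpos i : lowerCorner R i ≤ upperCorner R i := lowerCorner_le_upperCorner R i
  rw [cubeSet_subset_cubeSet_iff, Pi.le_def, Pi.le_def, ← forall_and]
  intro i
  have := hint i
  have := hlen i
  have := hpos i
  omega

lemma cubeSet_subset_biUnion_iff {R : ElemCube d} {S : Set (ElemCube d)} :
    cubeSet R ⊆ ⋃ Q ∈ S, cubeSet Q ↔ ∃ Q ∈ S, cubeSet R ⊆ cubeSet Q := by
  refine ⟨fun h => ?_, fun ⟨Q, hQ, hRQ⟩ => hRQ.trans (Set.subset_biUnion_of_mem hQ)⟩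
  obtain ⟨Q, hQ, hmem⟩ := Set.mem_iUnion₂.1 (h (cubeCenter_mem R))
  exact ⟨Q, hQ, cubeSet_subset_of_cubeCenter_mem hmem⟩

/-- The elementary cubes contained in `X`; those of dimension `k` generate the `k`-chains of `X`. -/
def cubesIn (X : Set (Fin d → ℝ)) : Set (ElemCube d) := {Q | cubeSet Q ⊆ X}

lemma cubesIn_mono {X Y : Set (Fin d → ℝ)} (h : X ⊆ Y) : cubesIn X ⊆ cubesIn Y :=
  fun _ hQ => hQ.trans h

lemma disjoint_cubesIn {X Y : Set (Fin d → ℝ)} (h : Disjoint X Y) :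
    Disjoint (cubesIn X) (cubesIn Y) := by
  rw [Set.disjoint_left]
  intro Q hX hY
  exact (cubeSet_nonempty Q).not_subset_empty (h hX hY)

lemma cubesIn_union_of_separatedNhds {X Y : Set (Fin d → ℝ)} (h : SeparatedNhds X Y) :
    cubesIn (X ∪ Y) = cubesIn X ∪ cubesIn Y := by
  obtain ⟨U, V, hU, hV, hXU, hYV, hUV⟩ := h
  refine Set.Subset.antisymm (fun Q hQ => ?_) (Set.union_subset
    (cubesIn_mono Set.subset_union_left) (cubesIn_mono Set.subset_union_right))
  have hQUV : cubeSet Q ⊆ U ∪ V := hQ.trans (Set.union_subset_union hXU hYV)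
  refine ((isPreconnected_cubeSet Q).subset_or_subset hU hV hUV hQUV).imp (fun hQU y hy => ?_)
    (fun hQV y hy => ?_)
  · exact (hQ hy).resolve_right fun hyY => Set.disjoint_left.1 hUV (hQU hy) (hYV hyY)
  · exact (hQ hy).resolve_left fun hyX => Set.disjoint_left.1 hUV (hXU hyX) (hQV hy)

/-- The pairs `(l, b)` encoding the elementary intervals contained in `[-n, n]`. -/
def elemIntervals (n : ℕ) : Finset (ℤ × Bool) :=
  Finset.Icc (-(n : ℤ)) n ×ˢ {false} ∪ Finset.Ico (-(n : ℤ)) n ×ˢ {true}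

lemma card_elemIntervals (n : ℕ) : (elemIntervals n).card = 4 * n + 1 := by
  rw [elemIntervals, Finset.card_union_of_disjoint]
  · simp only [Finset.card_product, Int.card_Icc, Int.card_Ico, Finset.card_singleton]
    omega
  · simp only [Finset.disjoint_left, Finset.mem_product, Finset.mem_singleton]
    rintro p ⟨-, hp⟩ ⟨-, hp'⟩
    simp [hp] at hp'

lemma cubesIn_lambda (n : ℕ) :
    cubesIn (lambda d n) = (Fintype.piFinset fun _ => elemIntervals n : Finset (ElemCube d)) := by
  ext Q
  rw [cubesIn, Set.mem_ofPred_eq, lambda_eq_Icc, cubeSet_subset_Icc_iff, Finset.mem_coe,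
    Fintype.mem_piFinset, Pi.le_def, Pi.le_def, ← forall_and]
  refine forall_congr' fun i => ?_
  rcases hb : (Q i).2 <;>
    simp only [elemIntervals, lowerCorner, upperCorner, hb, Finset.mem_union, Finset.mem_product,
      Finset.mem_Icc, Finset.mem_Ico, Finset.mem_singleton] <;> grind

lemma finite_cubesIn_lambda (n : ℕ) : (cubesIn (lambda d n)).Finite := by
  rw [cubesIn_lambda]
  exact Finset.finite_toSet _

lemma ncard_cubesIn_lambda (n : ℕ) : (cubesIn (lambda d n)).ncard = (4 * n + 1) ^ d := by
  rw [cubesIn_lambda, Set.ncard_coe_finset, Fintype.card_piFinset_const, card_elemIntervals]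

end ElementaryCubes

section CubicalChains

variable {d : ℕ}

lemma cubeSet_cons_subset_cubeSet_iff {a : ℤ × Bool} {R : ElemCube d} {Q : ElemCube (d + 1)} :
    cubeSet (Fin.cons a R : ElemCube (d + 1)) ⊆ cubeSet Q ↔
      ((Q 0).1 ≤ a.1 ∧ (a.1 + if a.2 then 1 else 0) ≤ (Q 0).1 + if (Q 0).2 then 1 else 0) ∧
        cubeSet R ⊆ cubeSet (Fin.tail Q) := by
  simp only [cubeSet_subset_cubeSet_iff, Pi.le_def, Fin.forall_fin_succ, lowerCorner, upperCorner,
    Fin.cons_zero, Fin.cons_succ, Fin.tail]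
  tauto

lemma boundaryCube_succ (Q : ElemCube (d + 1)) :
    boundaryCube (d + 1) Q =
      (if (Q 0).2 then
          Finsupp.single (Fin.cons ((Q 0).1 + 1, false) (Fin.tail Q)) 1
            - Finsupp.single (Fin.cons ((Q 0).1, false) (Fin.tail Q)) 1
        else 0)
      + (if (Q 0).2 then (-1 : ℤ) else 1) •
          (boundaryCube d (Fin.tail Q)).mapDomain (Fin.cons (Q 0)) :=
  rfl

lemma boundaryCube_mem_supported : ∀ {d : ℕ} (Q : ElemCube d),
    boundaryCube d Q ∈ Finsupp.supported ℤ ℤ (cubesIn (cubeSet Q))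
  | 0, _ => Submodule.zero_mem _
  | d + 1, Q => by
    rw [boundaryCube_succ]
    refine Submodule.add_mem _ ?_ (Submodule.smul_mem _ _ ?_)
    · split_ifs with h
      · refine Submodule.sub_mem _ ?_ ?_ <;>
          exact Finsupp.single_mem_supported _ _
            (cubeSet_cons_subset_cubeSet_iff.2 ⟨by simp [h], subset_rfl⟩)
      · exact Submodule.zero_mem _
    · have hmaps : Fin.cons (Q 0) '' cubesIn (cubeSet (Fin.tail Q)) ⊆ cubesIn (cubeSet Q) := by
        rintro _ ⟨R, hR, rfl⟩
        exact cubeSet_cons_subset_cubeSet_iff.2 ⟨⟨le_rfl, le_rfl⟩, hR⟩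
      refine Finsupp.supported_mono hmaps ?_
      rw [← Finsupp.lmapDomain_supported]
      exact Submodule.mem_map_of_mem (boundaryCube_mem_supported (Fin.tail Q))

lemma boundaryHom_single (Q : ElemCube d) (n : ℤ) :
    boundaryHom d (Finsupp.single Q n) = n • boundaryCube d Q := by
  simp [boundaryHom]

lemma supported_cubesIn_le_comap_boundaryHom (X : Set (Fin d → ℝ)) :
    Finsupp.supported ℤ ℤ (cubesIn X) ≤
      (Finsupp.supported ℤ ℤ (cubesIn X)).comap (boundaryHom d) := by
  rw [Finsupp.supported_eq_span_single, Submodule.span_le, ← Finsupp.supported_eq_span_single]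
  rintro _ ⟨Q, hQ, rfl⟩
  rw [SetLike.mem_coe, Submodule.mem_comap, boundaryHom_single, one_smul]
  exact Finsupp.supported_mono (cubesIn_mono hQ) (boundaryCube_mem_supported Q)

lemma chainsOn_eq (k : ℕ) (X : Set (Fin d → ℝ)) :
    chainsOn d k X = Finsupp.supported ℤ ℤ ({Q | cubeDim Q = k} ∩ cubesIn X) :=
  rfl

lemma chainsOn_le_supported_cubesIn (k : ℕ) (X : Set (Fin d → ℝ)) :
    chainsOn d k X ≤ Finsupp.supported ℤ ℤ (cubesIn X) :=
  Finsupp.supported_mono Set.inter_subset_right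

lemma chainsOn_mono (k : ℕ) {X Y : Set (Fin d → ℝ)} (h : X ⊆ Y) : chainsOn d k X ≤ chainsOn d k Y :=
  Finsupp.supported_mono (Set.inter_subset_inter_right _ (cubesIn_mono h))

lemma chainsOn_union_of_separatedNhds (k : ℕ) {X Y : Set (Fin d → ℝ)} (h : SeparatedNhds X Y) :
    chainsOn d k (X ∪ Y) = chainsOn d k X ⊔ chainsOn d k Y := by
  simp only [chainsOn_eq, cubesIn_union_of_separatedNhds h, Set.inter_union_distrib_left,
    Finsupp.supported_union]

lemma cycleMod_le_supported_cubesIn (q : ℕ) (X : Set (Fin d → ℝ)) :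
    cycleMod d q X ≤ Finsupp.supported ℤ ℤ (cubesIn X) :=
  inf_le_left.trans (chainsOn_le_supported_cubesIn q X)

lemma boundaryMod_le_supported_cubesIn (q : ℕ) (X : Set (Fin d → ℝ)) :
    boundaryMod d q X ≤ Finsupp.supported ℤ ℤ (cubesIn X) :=
  Submodule.map_le_iff_le_comap.2 <|
    (chainsOn_le_supported_cubesIn (q + 1) X).trans (supported_cubesIn_le_comap_boundaryHom X)

lemma finite_cycleMod (q : ℕ) {X : Set (Fin d → ℝ)} (hX : (cubesIn X).Finite) :
    Module.Finite ℤ (cycleMod d q X) :=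
  have := finite_supported (R := ℤ) hX
  finite_of_le (cycleMod_le_supported_cubesIn q X)

lemma finite_boundaryMod (q : ℕ) {X : Set (Fin d → ℝ)} (hX : (cubesIn X).Finite) :
    Module.Finite ℤ (boundaryMod d q X) :=
  have := finite_supported (R := ℤ) hX
  finite_of_le (boundaryMod_le_supported_cubesIn q X)

lemma finrank_cycleMod_le (q : ℕ) {X Y : Set (Fin d → ℝ)} (h : X ⊆ Y) (hY : (cubesIn Y).Finite) :
    Module.finrank ℤ (cycleMod d q Y) ≤
      Module.finrank ℤ (cycleMod d q X) + (cubesIn Y \ cubesIn X).ncard := by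
  refine (finrank_supported_inf_le _ (Set.inter_subset_inter_right {Q | cubeDim Q = q}
    (cubesIn_mono h)) (hY.inter_of_right _)).trans (Nat.add_le_add_left ?_ _)
  rw [← Set.inter_sdiff_distrib_left]
  exact Set.ncard_le_ncard Set.inter_subset_right hY.sdiff

lemma finrank_boundaryMod_le (q : ℕ) {X Y : Set (Fin d → ℝ)} (h : X ⊆ Y)
    (hY : (cubesIn Y).Finite) :
    Module.finrank ℤ (boundaryMod d q Y) ≤
      Module.finrank ℤ (boundaryMod d q X) + (cubesIn Y \ cubesIn X).ncard := by
  refine (finrank_map_supported_le _ (Set.inter_subset_inter_right {Q | cubeDim Q = q + 1}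
    (cubesIn_mono h)) (hY.inter_of_right _)).trans (Nat.add_le_add_left ?_ _)
  rw [← Set.inter_sdiff_distrib_left]
  exact Set.ncard_le_ncard Set.inter_subset_right hY.sdiff

end CubicalChains

section BettiNumbers

variable {d : ℕ} (q : ℕ) {X Y : Set (Fin d → ℝ)}

lemma betti_eq_relRank (X : Set (Fin d → ℝ)) :
    betti d q X = relRank (cycleMod d q X) (boundaryMod d q X) :=
  rfl

lemma betti_congr (h : cubesIn X = cubesIn Y) : betti d q X = betti d q Y := by
  simp only [betti_eq_relRank, cycleMod, boundaryMod, chainsOn_eq, h]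

lemma abs_betti_sub_betti_le (h : X ⊆ Y) (hY : (cubesIn Y).Finite) :
    |(betti d q Y : ℤ) - betti d q X| ≤ (cubesIn Y \ cubesIn X).ncard :=
  have := finite_cycleMod q hY
  have := finite_boundaryMod q hY
  abs_relRank_sub_relRank_le (inf_le_inf_right _ (chainsOn_mono q h))
    (Submodule.map_mono (chainsOn_mono (q + 1) h)) (finrank_cycleMod_le q h hY)
    (finrank_boundaryMod_le q h hY)

lemma betti_empty : betti d q ∅ = 0 := by
  have hcycle : cycleMod d q ∅ = ⊥ := by
    have hempty : cubesIn (∅ : Set (Fin d → ℝ)) = ∅ :=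
      Set.eq_empty_of_forall_notMem fun Q hQ => (cubeSet_nonempty Q).not_subset_empty hQ
    rw [cycleMod, chainsOn_eq, hempty, Set.inter_empty, Finsupp.supported_empty, bot_inf_eq]
  rw [betti_eq_relRank, hcycle]
  have h := relRank_add_finrank_inf ⊥ (boundaryMod d q ∅)
  rw [finrank_bot] at h
  omega

lemma betti_le_ncard (hX : (cubesIn X).Finite) : betti d q X ≤ (cubesIn X).ncard := by
  have h := (abs_le.1 (abs_betti_sub_betti_le q (Set.empty_subset X) hX)).2
  rw [betti_empty] at h
  have := Set.ncard_le_ncard (Set.sdiff_subset : cubesIn X \ cubesIn ∅ ⊆ cubesIn X) hX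
  omega

lemma betti_union_of_separatedNhds (h : SeparatedNhds X Y) (hX : (cubesIn X).Finite)
    (hY : (cubesIn Y).Finite) : betti d q (X ∪ Y) = betti d q X + betti d q Y := by
  have := finite_cycleMod q hX
  have := finite_boundaryMod q hX
  have := finite_cycleMod q hY
  have := finite_boundaryMod q hY
  have hdisj : Disjoint (Finsupp.supported ℤ ℤ (cubesIn X)) (Finsupp.supported ℤ ℤ (cubesIn Y)) :=
    Finsupp.disjoint_supported_supported (disjoint_cubesIn h.disjoint)
  have hcycle : cycleMod d q (X ∪ Y) = cycleMod d q X ⊔ cycleMod d q Y := by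
    rw [cycleMod, chainsOn_union_of_separatedNhds q h]
    exact sup_inf_ker_of_disjoint (chainsOn_le_supported_cubesIn q X)
      (chainsOn_le_supported_cubesIn q Y) (supported_cubesIn_le_comap_boundaryHom X)
      (supported_cubesIn_le_comap_boundaryHom Y) hdisj
  have hboundary : boundaryMod d q (X ∪ Y) = boundaryMod d q X ⊔ boundaryMod d q Y := by
    rw [boundaryMod, chainsOn_union_of_separatedNhds (q + 1) h, Submodule.map_sup]
    rfl
  rw [betti_eq_relRank, hcycle, hboundary]
  exact relRank_sup_sup_of_disjoint <| hdisj.mono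
    (sup_le (cycleMod_le_supported_cubesIn q X) (boundaryMod_le_supported_cubesIn q X))
    (sup_le (cycleMod_le_supported_cubesIn q Y) (boundaryMod_le_supported_cubesIn q Y))

variable {ι : Type*} {T : Finset ι} {K : ι → Set (Fin d → ℝ)}

lemma betti_inter_biUnion (X : Set (Fin d → ℝ)) (hclosed : ∀ i ∈ T, IsClosed (K i))
    (hdisj : (T : Set ι).PairwiseDisjoint K) (hfin : (cubesIn (⋃ i ∈ T, K i)).Finite) :
    betti d q (X ∩ ⋃ i ∈ T, K i) = ∑ i ∈ T, betti d q (X ∩ K i) := by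
  classical
  induction T using Finset.induction_on with
  | empty => simp [betti_empty]
  | insert i T hi ih =>
    rw [Finset.set_biUnion_insert] at hfin ⊢
    rw [Finset.forall_mem_insert] at hclosed
    rw [Finset.coe_insert, Set.pairwiseDisjoint_insert] at hdisj
    have hsep : SeparatedNhds (K i) (⋃ j ∈ T, K j) := by
      refine normal_separation hclosed.1 (isClosed_biUnion_finset hclosed.2) ?_
      exact Set.disjoint_iUnion₂_right.2 fun j hj => hdisj.2 j hj fun h => hi (h ▸ hj)
    rw [Set.inter_union_distrib_left, Finset.sum_insert hi,
      ← ih hclosed.2 hdisj.1 (hfin.subset (cubesIn_mono Set.subset_union_right))]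
    exact betti_union_of_separatedNhds q
      (hsep.mono Set.inter_subset_right Set.inter_subset_right)
      (hfin.subset (cubesIn_mono (Set.inter_subset_right.trans Set.subset_union_left)))
      (hfin.subset (cubesIn_mono (Set.inter_subset_right.trans Set.subset_union_right)))

lemma sum_ncard_cubesIn_le (hdisj : (T : Set ι).PairwiseDisjoint K)
    (hfin : (cubesIn (⋃ i ∈ T, K i)).Finite) :
    ∑ i ∈ T, (cubesIn (K i)).ncard ≤ (cubesIn (⋃ i ∈ T, K i)).ncard := by
  have hsub i (hi : i ∈ T) : cubesIn (K i) ⊆ cubesIn (⋃ i ∈ T, K i) :=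
    cubesIn_mono (Set.subset_biUnion_of_mem (u := K) hi)
  rw [← finsum_mem_coe_finset, ← Set.Finite.ncard_biUnion T.finite_toSet
    (fun i hi => hfin.subset (hsub i hi))
    fun i hi j hj hij => disjoint_cubesIn (hdisj hi hj hij)]
  exact Set.ncard_le_ncard (Set.iUnion₂_subset hsub) hfin

lemma abs_betti_inter_sub_sum_le (X : Set (Fin d → ℝ)) {L : Set (Fin d → ℝ)}
    (hL : (cubesIn L).Finite) (hclosed : ∀ i ∈ T, IsClosed (K i))
    (hdisj : (T : Set ι).PairwiseDisjoint K) (hKL : ∀ i ∈ T, K i ⊆ L) :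
    |(betti d q (X ∩ L) : ℤ) - ∑ i ∈ T, (betti d q (X ∩ K i) : ℤ)| ≤
      (cubesIn L).ncard - ∑ i ∈ T, ((cubesIn (K i)).ncard : ℤ) := by
  have hsub : ⋃ i ∈ T, K i ⊆ L := Set.iUnion₂_subset hKL
  have hfin : (cubesIn (⋃ i ∈ T, K i)).Finite := hL.subset (cubesIn_mono hsub)
  have hmissing : cubesIn (X ∩ L) \ cubesIn (X ∩ ⋃ i ∈ T, K i) ⊆
      cubesIn L \ cubesIn (⋃ i ∈ T, K i) := fun Q hQ =>
    ⟨hQ.1.trans Set.inter_subset_right,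
      fun hQK => hQ.2 (Set.subset_inter (hQ.1.trans Set.inter_subset_left) hQK)⟩
  rw [← Nat.cast_sum, ← Nat.cast_sum, ← betti_inter_biUnion q X hclosed hdisj hfin]
  refine (abs_betti_sub_betti_le q (Set.inter_subset_inter_right X hsub)
    (hL.subset (cubesIn_mono Set.inter_subset_right))).trans ?_
  have := Set.ncard_le_ncard hmissing hL.sdiff
  have := Set.ncard_sdiff_add_ncard_of_subset (cubesIn_mono hsub) hL
  have := sum_ncard_cubesIn_le hdisj hfin
  omega

end BettiNumbers

section Translation

open Pointwise

variable {d : ℕ}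

lemma leftInverse_translateCube_neg (x : Fin d → ℤ) :
    Function.LeftInverse (translateCube (-x)) (translateCube x) := by
  intro Q
  funext i
  simp [translateCube]

lemma translateCube_injective (x : Fin d → ℤ) : Function.Injective (translateCube x) :=
  (leftInverse_translateCube_neg x).injective

lemma rightInverse_translateCube_neg (x : Fin d → ℤ) :
    Function.RightInverse (translateCube (-x)) (translateCube x) := by
  have h := leftInverse_translateCube_neg (-x)
  rwa [neg_neg] at h

lemma translateCube_cons (x : Fin (d + 1) → ℤ) (a : ℤ × Bool) (R : ElemCube d) :
    translateCube x (Fin.cons a R : ElemCube (d + 1)) =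
      (Fin.cons (a.1 + x 0, a.2) (translateCube (Fin.tail x) R) : ElemCube (d + 1)) := by
  funext i
  refine Fin.cases ?_ (fun j => ?_) i <;> simp [translateCube, Fin.tail]

lemma boundaryCube_translateCube : ∀ {d : ℕ} (x : Fin d → ℤ) (Q : ElemCube d),
    boundaryCube d (translateCube x Q) = (boundaryCube d Q).mapDomain (translateCube x)
  | 0, _, _ => Finsupp.mapDomain_zero.symm
  | d + 1, x, Q => by
    have htail : Fin.tail (translateCube x Q) = translateCube (Fin.tail x) (Fin.tail Q) := rfl
    have hhead : translateCube x Q 0 = ((Q 0).1 + x 0, (Q 0).2) := rfl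
    have hcomm (c : CubChain d) :
        (c.mapDomain (translateCube (Fin.tail x))).mapDomain (Fin.cons (translateCube x Q 0)) =
          (c.mapDomain (Fin.cons (Q 0))).mapDomain (translateCube x) := by
      rw [← Finsupp.mapDomain_comp, ← Finsupp.mapDomain_comp]
      congr 1
      funext R
      exact (translateCube_cons x (Q 0) R).symm
    rw [boundaryCube_succ, boundaryCube_succ, htail, boundaryCube_translateCube (Fin.tail x),
      hcomm, Finsupp.mapDomain_add, Finsupp.mapDomain_smul, hhead]
    congr 1
    split_ifs
    · rw [← Finsupp.lmapDomain_apply ℤ ℤ, map_sub]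
      simp only [Finsupp.lmapDomain_apply, Finsupp.mapDomain_single, translateCube_cons,
        add_right_comm]
    · exact Finsupp.mapDomain_zero.symm

lemma boundaryHom_comp_lmapDomain_translateCube (x : Fin d → ℤ) :
    boundaryHom d ∘ₗ Finsupp.lmapDomain ℤ ℤ (translateCube x) =
      Finsupp.lmapDomain ℤ ℤ (translateCube x) ∘ₗ boundaryHom d := by
  refine Finsupp.lhom_ext fun Q n => ?_
  simp only [LinearMap.comp_apply, Finsupp.lmapDomain_apply, Finsupp.mapDomain_single,
    boundaryHom_single, boundaryCube_translateCube, Finsupp.mapDomain_smul]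

lemma lowerCorner_translateCube (x : Fin d → ℤ) (Q : ElemCube d) :
    lowerCorner (translateCube x Q) = x + lowerCorner Q := by
  funext i
  exact add_comm (Q i).1 (x i)

lemma upperCorner_translateCube (x : Fin d → ℤ) (Q : ElemCube d) :
    upperCorner (translateCube x Q) = x + upperCorner Q := by
  funext i
  exact (add_right_comm (Q i).1 (x i) _).trans (add_comm _ (x i))

lemma intCast_comp_add (a b : Fin d → ℤ) :
    (Int.cast ∘ (a + b) : Fin d → ℝ) = Int.cast ∘ a + Int.cast ∘ b :=
  funext fun i => Int.cast_add (a i) (b i)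

lemma vadd_Icc_intCast (x a b : Fin d → ℤ) :
    (Int.cast ∘ x : Fin d → ℝ) +ᵥ Set.Icc (Int.cast ∘ a : Fin d → ℝ) (Int.cast ∘ b) =
      Set.Icc (Int.cast ∘ (x + a)) (Int.cast ∘ (x + b)) := by
  rw [intCast_comp_add, intCast_comp_add]
  exact Set.image_const_add_Icc _ _ _

lemma cubeSet_translateCube (x : Fin d → ℤ) (Q : ElemCube d) :
    cubeSet (translateCube x Q) = (Int.cast ∘ x : Fin d → ℝ) +ᵥ cubeSet Q := by
  rw [cubeSet_eq_Icc, cubeSet_eq_Icc, lowerCorner_translateCube, upperCorner_translateCube,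
    vadd_Icc_intCast]

lemma cubesIn_vadd (x : Fin d → ℤ) (X : Set (Fin d → ℝ)) :
    cubesIn ((Int.cast ∘ x : Fin d → ℝ) +ᵥ X) = translateCube x '' cubesIn X := by
  ext Q
  constructor
  · intro hQ
    have hQ' : translateCube x (translateCube (-x) Q) = Q := rightInverse_translateCube_neg x Q
    refine ⟨translateCube (-x) Q, ?_, hQ'⟩
    rw [← hQ', cubesIn, Set.mem_ofPred_eq, cubeSet_translateCube x] at hQ
    exact Set.vadd_set_subset_vadd_set_iff.1 hQ
  · rintro ⟨R, hR, rfl⟩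
    rw [cubesIn, Set.mem_ofPred_eq, cubeSet_translateCube]
    exact Set.vadd_set_mono hR

lemma ncard_cubesIn_vadd (x : Fin d → ℤ) (X : Set (Fin d → ℝ)) :
    (cubesIn ((Int.cast ∘ x : Fin d → ℝ) +ᵥ X)).ncard = (cubesIn X).ncard := by
  rw [cubesIn_vadd, Set.ncard_image_of_injective _ (translateCube_injective x)]

lemma chainsOn_vadd (k : ℕ) (x : Fin d → ℤ) (X : Set (Fin d → ℝ)) :
    chainsOn d k ((Int.cast ∘ x : Fin d → ℝ) +ᵥ X) =
      (chainsOn d k X).map (Finsupp.lmapDomain ℤ ℤ (translateCube x)) := by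
  rw [chainsOn_eq, chainsOn_eq, Finsupp.lmapDomain_supported, cubesIn_vadd,
    ← Set.image_preimage_inter]
  rfl

lemma betti_vadd (q : ℕ) (x : Fin d → ℤ) (X : Set (Fin d → ℝ)) :
    betti d q ((Int.cast ∘ x : Fin d → ℝ) +ᵥ X) = betti d q X := by
  have hinj : Function.Injective (Finsupp.lmapDomain ℤ ℤ (translateCube x)) :=
    Finsupp.mapDomain_injective (translateCube_injective x)
  have hcomm := boundaryHom_comp_lmapDomain_translateCube x
  rw [betti_eq_relRank, betti_eq_relRank, cycleMod, boundaryMod, chainsOn_vadd, chainsOn_vadd,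
    map_inf_ker_eq_of_comp_eq hinj hcomm, ← Submodule.map_comp, hcomm, Submodule.map_comp]
  exact relRank_map_of_injective hinj _ _

lemma cubSet_configShift (x : Fin d → ℤ) (ω : Config d) (t : ℝ) :
    cubSet (configShift x ω) t = (Int.cast ∘ x : Fin d → ℝ) +ᵥ cubSet ω t := by
  simp only [cubSet, Set.vadd_set_iUnion₂, ← cubeSet_translateCube]
  rw [← (rightInverse_translateCube_neg x).surjective.iUnion_comp]
  simp only [configShift, leftInverse_translateCube_neg x _, Set.mem_ofPred_eq]

lemma betti_cubSet_inter_vadd_lambda (q m : ℕ) (x : Fin d → ℤ) (ω : Config d) (t : ℝ) :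
    betti d q (cubSet ω t ∩ ((Int.cast ∘ x : Fin d → ℝ) +ᵥ lambda d m)) =
      bettiN d q m t (configShift (-x) ω) := by
  have hx : (Int.cast ∘ (-x) : Fin d → ℝ) = -(Int.cast ∘ x) := by
    funext i
    simp
  rw [bettiN, cubSet_configShift, ← betti_vadd q x (_ ∩ lambda d m), Set.vadd_set_inter, hx,
    vadd_neg_vadd]

end Translation

section Expectation

variable {d : ℕ} (q : ℕ)

lemma measurableSet_setOf_cubeSet_subset_cubSet (R : ElemCube d) (t : ℝ) :
    MeasurableSet {ω : Config d | cubeSet R ⊆ cubSet ω t} := by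
  have hunion : {ω : Config d | cubeSet R ⊆ cubSet ω t} =
      ⋃ Q ∈ {Q : ElemCube d | cubeSet R ⊆ cubeSet Q}, {ω | (ω Q : ℝ) ≤ t} := by
    ext ω
    rw [Set.mem_ofPred_eq, cubSet, cubeSet_subset_biUnion_iff]
    simp [and_comm]
  rw [hunion]
  exact MeasurableSet.biUnion (Set.to_countable _) fun Q _ =>
    measurableSet_le (measurable_subtype_coe.comp (measurable_pi_apply Q)) measurable_const

-- `bettiN` depends only on which of the finitely many cubes of `Λ_n` belong to `X(t)`.
lemma measurable_bettiN (n : ℕ) (t : ℝ) : Measurable (bettiN d q n t) := by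
  have := (finite_cubesIn_lambda (d := d) n).to_subtype
  let present (ω : Config d) (R : cubesIn (lambda d n)) : Prop := cubeSet R.1 ⊆ cubSet ω t
  have hpresent : Measurable present := measurable_pi_lambda _ fun R =>
    measurableSet_setOfPred.1 (measurableSet_setOf_cubeSet_subset_cubSet R.1 t)
  have hfactor : (bettiN d q n t).FactorsThrough present := by
    intro ω ω' h
    refine betti_congr q (Set.ext fun R => ?_)
    simp only [cubesIn, Set.mem_ofPred_eq, Set.subset_inter_iff]
    exact and_congr_left fun hR => iff_of_eq (congrFun h ⟨R, hR⟩)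
  rw [← hfactor.extend_comp (fun _ => 0)]
  exact (measurable_of_finite _).comp hpresent

lemma bettiN_le (n : ℕ) (t : ℝ) (ω : Config d) : bettiN d q n t ω ≤ (4 * n + 1) ^ d := by
  have hsub : cubesIn (cubSet ω t ∩ lambda d n) ⊆ cubesIn (lambda d n) :=
    cubesIn_mono Set.inter_subset_right
  rw [← ncard_cubesIn_lambda]
  exact (betti_le_ncard q ((finite_cubesIn_lambda n).subset hsub)).trans
    (Set.ncard_le_ncard hsub (finite_cubesIn_lambda n))

lemma norm_bettiN_le (n : ℕ) (t : ℝ) (ω : Config d) :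
    ‖(bettiN d q n t ω : ℝ)‖ ≤ (4 * n + 1) ^ d := by
  rw [Real.norm_natCast]
  exact_mod_cast bettiN_le q n t ω

lemma measurable_configShift (x : Fin d → ℤ) : Measurable (configShift (d := d) x) :=
  measurable_pi_lambda _ fun _ => measurable_pi_apply _

variable {P : Measure (Config d)}

lemma integrable_bettiN [IsFiniteMeasure P] (n : ℕ) (t : ℝ) :
    Integrable (fun ω => (bettiN d q n t ω : ℝ)) P :=
  Integrable.of_bound (measurable_from_nat.comp (measurable_bettiN q n t)).aestronglyMeasurable _
    (ae_of_all _ (norm_bettiN_le q n t))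

lemma measurePreserving_configShift (hP : Stationary P) (x : Fin d → ℤ) :
    MeasurePreserving (configShift x) P P :=
  ⟨measurable_configShift x, Measure.ext fun A hA => by
    rw [Measure.map_apply (measurable_configShift x) hA, hP x A hA]⟩

lemma integral_bettiN_configShift (hP : Stationary P) (x : Fin d → ℤ) (n : ℕ) (t : ℝ) :
    ∫ ω, (bettiN d q n t (configShift x ω) : ℝ) ∂P = ∫ ω, (bettiN d q n t ω : ℝ) ∂P := by
  have hmp := measurePreserving_configShift hP x
  have hmeas : Measurable fun ω : Config d => (bettiN d q n t ω : ℝ) :=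
    measurable_from_nat.comp (measurable_bettiN q n t)
  rw [← integral_map (φ := configShift x) (f := fun ω => (bettiN d q n t ω : ℝ))
    hmp.aemeasurable hmeas.aestronglyMeasurable, hmp.map_eq]

lemma norm_integral_bettiN_le [IsProbabilityMeasure P] (n : ℕ) (t : ℝ) :
    ‖∫ ω, (bettiN d q n t ω : ℝ) ∂P‖ ≤ (4 * n + 1) ^ d := by
  simpa using norm_integral_le_of_norm_le_const (μ := P) (ae_of_all _ (norm_bettiN_le q n t))

end Expectation

section Tiling

open Pointwise

variable {d : ℕ}

/-- The translate of `Λ_m` centred at `(2 m + 1) k`. The spacing exceeds the side length `2 m` by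
`1`, so that distinct tiles are disjoint and the Betti numbers of their union add up. -/
def tile (m : ℕ) (k : Fin d → ℤ) : Set (Fin d → ℝ) :=
  (Int.cast ∘ ((2 * m + 1 : ℤ) • k) : Fin d → ℝ) +ᵥ lambda d m

/-- The indices `k` of the tiles used to fill a large box. -/
def tileIndices (d N : ℕ) : Finset (Fin d → ℤ) :=
  Finset.Icc (fun _ => -(N : ℤ)) fun _ => (N : ℤ)

lemma card_tileIndices (d N : ℕ) : (tileIndices d N).card = (2 * N + 1) ^ d := by
  rw [tileIndices, Pi.card_Icc]
  simp only [Int.card_Icc, Finset.prod_const, Finset.card_univ, Fintype.card_fin]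
  congr 1
  omega

lemma tile_eq_Icc (m : ℕ) (k : Fin d → ℤ) :
    tile m k = Set.Icc (Int.cast ∘ fun i => (2 * m + 1) * k i - m)
      (Int.cast ∘ fun i => (2 * m + 1) * k i + m) := by
  rw [tile, lambda_eq_Icc, vadd_Icc_intCast]
  rfl

lemma isClosed_tile (m : ℕ) (k : Fin d → ℤ) : IsClosed (tile m k) := by
  rw [tile_eq_Icc]
  exact isClosed_Icc

lemma tile_subset_lambda {m n N : ℕ} (h : (2 * m + 1) * N + m ≤ n) {k : Fin d → ℤ}
    (hk : k ∈ tileIndices d N) : tile m k ⊆ lambda d n := by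
  rw [tileIndices, Finset.mem_Icc] at hk
  rw [tile_eq_Icc, lambda_eq_Icc]
  have hcast : (2 * m + 1 : ℤ) * N + m ≤ n := by exact_mod_cast h
  refine Set.Icc_subset_Icc (intCast_comp_le_intCast_comp_iff.2 fun i => ?_)
    (intCast_comp_le_intCast_comp_iff.2 fun i => ?_)
  · have hlower : (2 * m + 1 : ℤ) * -N ≤ (2 * m + 1) * k i :=
      mul_le_mul_of_nonneg_left (hk.1 i) (by positivity)
    dsimp only
    linarith [hcast]
  · have hupper : (2 * m + 1 : ℤ) * k i ≤ (2 * m + 1) * N :=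
      mul_le_mul_of_nonneg_left (hk.2 i) (by positivity)
    dsimp only
    linarith [hcast]

lemma pairwise_disjoint_tile (m : ℕ) : Pairwise (Function.onFun Disjoint (tile (d := d) m)) := by
  intro k l hkl
  obtain ⟨i, hi⟩ := Function.ne_iff.1 hkl
  rw [Function.onFun, Set.disjoint_left]
  intro y hk hl
  rw [tile_eq_Icc] at hk hl
  have hlt : (2 * m + 1 : ℤ) * k i - m ≤ (2 * m + 1) * l i + m := by
    exact Int.cast_le.1 ((hk.1 i).trans (hl.2 i))
  have hgt : (2 * m + 1 : ℤ) * l i - m ≤ (2 * m + 1) * k i + m := by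
    exact Int.cast_le.1 ((hl.1 i).trans (hk.2 i))
  rcases lt_or_gt_of_ne hi with h | h <;> nlinarith

lemma ncard_cubesIn_tile (m : ℕ) (k : Fin d → ℤ) :
    (cubesIn (tile m k)).ncard = (4 * m + 1) ^ d := by
  rw [tile, ncard_cubesIn_vadd, ncard_cubesIn_lambda]

variable (q : ℕ) {m n N : ℕ}

lemma betti_cubSet_inter_tile (m : ℕ) (k : Fin d → ℤ) (t : ℝ) (ω : Config d) :
    betti d q (cubSet ω t ∩ tile m k) =
      bettiN d q m t (configShift (-((2 * m + 1 : ℤ) • k)) ω) :=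
  betti_cubSet_inter_vadd_lambda q m _ ω t

lemma abs_bettiN_sub_sum_bettiN_configShift_le (h : (2 * m + 1) * N + m ≤ n) (t : ℝ)
    (ω : Config d) :
    |(bettiN d q n t ω : ℝ) - ∑ k ∈ tileIndices d N,
        (bettiN d q m t (configShift (-((2 * m + 1 : ℤ) • k)) ω) : ℝ)| ≤
      (4 * n + 1) ^ d - ((2 * N + 1) * (4 * m + 1)) ^ d := by
  have hbetti := abs_betti_inter_sub_sum_le q (cubSet ω t) (finite_cubesIn_lambda n)
    (fun k _ => isClosed_tile m k) ((pairwise_disjoint_tile m).set_pairwise _)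
    (fun k => tile_subset_lambda h)
  simp only [ncard_cubesIn_lambda, ncard_cubesIn_tile, betti_cubSet_inter_tile, Finset.sum_const,
    card_tileIndices, nsmul_eq_mul] at hbetti
  rify at hbetti
  rwa [mul_pow]

lemma norm_integral_bettiN_sub_mul_le {P : Measure (Config d)} [IsProbabilityMeasure P]
    (hP : Stationary P) (h : (2 * m + 1) * N + m ≤ n) (t : ℝ) :
    ‖∫ ω, (bettiN d q n t ω : ℝ) ∂P - (2 * N + 1) ^ d * ∫ ω, (bettiN d q m t ω : ℝ) ∂P‖ ≤
      (4 * n + 1) ^ d - ((2 * N + 1) * (4 * m + 1)) ^ d := by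
  let shifted (k : Fin d → ℤ) (ω : Config d) : ℝ :=
    bettiN d q m t (configShift (-((2 * m + 1 : ℤ) • k)) ω)
  have hint k : Integrable (shifted k) P :=
    (measurePreserving_configShift hP _).integrable_comp_of_integrable (integrable_bettiN q m t)
  have hsum : ∫ ω, ∑ k ∈ tileIndices d N, shifted k ω ∂P =
      (2 * N + 1) ^ d * ∫ ω, (bettiN d q m t ω : ℝ) ∂P := by
    rw [integral_finsetSum _ fun k _ => hint k]
    simp only [shifted, integral_bettiN_configShift q hP, Finset.sum_const, card_tileIndices,
      nsmul_eq_mul]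
    push_cast
    rfl
  rw [← hsum, ← integral_sub (integrable_bettiN q n t) (integrable_finsetSum _ fun k _ => hint k)]
  have hbound ω : ‖(bettiN d q n t ω : ℝ) - ∑ k ∈ tileIndices d N, shifted k ω‖ ≤
      (4 * n + 1) ^ d - ((2 * N + 1) * (4 * m + 1)) ^ d :=
    abs_bettiN_sub_sum_bettiN_configShift_le q h t ω
  simpa using norm_integral_le_of_norm_le_const (μ := P) (ae_of_all _ hbound)

end Tiling

section UniformLimit

lemma tendstoUniformly_limsup_of_forall_exists_near {α : Type*} {f : ℕ → α → ℝ}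
    (h : ∀ ε > 0, ∃ g : α → ℝ, ∀ᶠ n in atTop, ∀ t, |f n t - g t| < ε) :
    TendstoUniformly f (fun t => limsup (f · t) atTop) atTop := by
  have hcauchy : UniformCauchySeqOn f atTop Set.univ := by
    refine Metric.uniformCauchySeqOn_iff.2 fun ε hε => ?_
    obtain ⟨g, hg⟩ := h (ε / 2) (half_pos hε)
    obtain ⟨N, hN⟩ := eventually_atTop.1 hg
    refine ⟨N, fun m hm n hn t _ => ?_⟩
    calc dist (f m t) (f n t) ≤ dist (f m t) (g t) + dist (f n t) (g t) :=
          dist_triangle_right _ _ _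
      _ < ε / 2 + ε / 2 := add_lt_add (hN m hm t) (hN n hn t)
      _ = ε := add_halves ε
  rw [← tendstoUniformlyOn_univ]
  refine hcauchy.tendstoUniformlyOn_of_tendsto fun t ht => ?_
  obtain ⟨l, hl⟩ := cauchySeq_tendsto_of_complete (hcauchy.cauchySeq ht)
  rwa [hl.limsup_eq]

/-- For `m ≤ n`, the largest `N` such that all tiles `tile m k` with `k ∈ tileIndices d N` lie in
`Λ_n`. For `n < m`, when there is no such `N`, truncated subtraction gives the junk value `0`. -/
def tileRadius (m n : ℕ) : ℕ := (n - m) / (2 * m + 1)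

lemma tileRadius_spec {m n : ℕ} (h : m ≤ n) :
    (2 * m + 1) * tileRadius m n + m ≤ n ∧ n < (2 * m + 1) * (tileRadius m n + 1) + m := by
  have hdiv := Nat.div_add_mod (n - m) (2 * m + 1)
  have hmod : (n - m) % (2 * m + 1) < 2 * m + 1 := Nat.mod_lt _ (Nat.succ_pos _)
  rw [tileRadius, mul_add_one]
  omega

lemma tendsto_tileRadius_div (m : ℕ) :
    Tendsto (fun n : ℕ => (2 * tileRadius m n + 1 : ℝ) / (2 * n)) atTop
      (𝓝 (1 / (2 * m + 1))) := by
  have hlim : Tendsto (fun n : ℕ => (2 * m + 1 : ℝ) / n) atTop (𝓝 0) :=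
    tendsto_const_div_atTop_nhds_zero_nat _
  rw [tendsto_iff_norm_sub_tendsto_zero]
  refine squeeze_zero' (Eventually.of_forall fun _ => norm_nonneg _) ?_ hlim
  filter_upwards [eventually_ge_atTop m, eventually_gt_atTop 0] with n hmn hn
  obtain ⟨hle, hlt⟩ := tileRadius_spec hmn
  set N := tileRadius m n
  have hle' : (2 * m + 1 : ℝ) * N + m ≤ n := by exact_mod_cast hle
  have hlt' : (n : ℝ) < (2 * m + 1) * (N + 1) + m := by exact_mod_cast hlt
  have hn' : (0 : ℝ) < n := by exact_mod_cast hn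
  have hm : (0 : ℝ) ≤ m := m.cast_nonneg
  have hdiff : (2 * N + 1 : ℝ) / (2 * n) - 1 / (2 * m + 1) =
      ((2 * N + 1) * (2 * m + 1) - 2 * n) / (2 * n * (2 * m + 1)) := by
    field_simp
  rw [hdiff, Real.norm_eq_abs, abs_div, abs_of_pos (by positivity : 0 < 2 * (n : ℝ) * (2 * m + 1)),
    div_le_div_iff₀ (by positivity) hn']
  have habs : |(2 * N + 1 : ℝ) * (2 * m + 1) - 2 * n| ≤ 2 * (2 * m + 1) := by
    rw [abs_le]
    constructor <;> linarith
  nlinarith [mul_le_mul_of_nonneg_right habs hn'.le, mul_nonneg hm hn'.le,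
    mul_nonneg hm (mul_nonneg hm hn'.le)]

lemma tendsto_four_mul_add_one_div : Tendsto (fun n : ℕ => (4 * n + 1 : ℝ) / (2 * n)) atTop
    (𝓝 2) := by
  have hlim : Tendsto (fun n : ℕ => 2 + (1 / 2 : ℝ) / n) atTop (𝓝 (2 + 0)) :=
    tendsto_const_nhds.add (tendsto_const_div_atTop_nhds_zero_nat _)
  rw [add_zero] at hlim
  refine hlim.congr' ?_
  filter_upwards [eventually_ne_atTop 0] with n hn
  field_simp
  ring

lemma tendsto_one_div_mul_four_mul_add_one :
    Tendsto (fun m : ℕ => 1 / (2 * m + 1) * (4 * m + 1 : ℝ)) atTop (𝓝 2) := by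
  have hlim : Tendsto (fun m : ℕ => 2 - (1 : ℝ) / (2 * m + 1)) atTop (𝓝 (2 - 0)) := by
    refine tendsto_const_nhds.sub (tendsto_const_nhds.div_atTop ?_)
    exact tendsto_atTop_add_const_right _ _
      (tendsto_natCast_atTop_atTop.const_mul_atTop two_pos)
  rw [sub_zero] at hlim
  refine hlim.congr fun m => ?_
  field_simp
  ring

/-- `a n` is, like the expected Betti number of the box `Λ_n` with its `(4 n + 1) ^ d` elementary
cubes, the sum of its values on `(2 N + 1) ^ d` tiles of size `m` up to the number of elementary
cubes of `Λ_n` not covered by these tiles. -/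
structure IsAlmostAdditive (d : ℕ) (a : ℕ → ℝ) : Prop where
  abs_apply_le (n : ℕ) : |a n| ≤ (4 * n + 1) ^ d
  abs_apply_sub_le {m n N : ℕ} (h : (2 * m + 1) * N + m ≤ n) :
    |a n - (2 * N + 1) ^ d * a m| ≤ (4 * n + 1 : ℝ) ^ d - ((2 * N + 1) * (4 * m + 1)) ^ d

/-- An upper bound for the distance between `|Λ_n|⁻¹ a n` and `(2 m + 1)⁻ᵈ a m` for almost additive
`a`: the density of the elementary cubes of `Λ_n` not covered by tiles of size `m`, plus the error
from replacing `(2 N + 1) / (2 n)`, with `N = tileRadius m n`, by its limit `1 / (2 m + 1)`. -/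
def tilingError (d m n : ℕ) : ℝ :=
  ((4 * n + 1) / (2 * n)) ^ d - ((2 * tileRadius m n + 1) / (2 * n) * (4 * m + 1)) ^ d +
    |((2 * tileRadius m n + 1 : ℝ) / (2 * n)) ^ d - (1 / (2 * m + 1)) ^ d| * (4 * m + 1) ^ d

lemma tendsto_tilingError (d m : ℕ) :
    Tendsto (tilingError d m) atTop (𝓝 (2 ^ d - (1 / (2 * m + 1) * (4 * m + 1)) ^ d)) := by
  have hr := tendsto_tileRadius_div m
  have hgap := ((hr.pow d).sub_const ((1 / (2 * m + 1 : ℝ)) ^ d)).abs.mul_const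
    ((4 * m + 1 : ℝ) ^ d)
  rw [sub_self, abs_zero, zero_mul] at hgap
  have hlim :=
    ((tendsto_four_mul_add_one_div.pow d).sub ((hr.mul_const (4 * m + 1 : ℝ)).pow d)).add hgap
  rw [add_zero] at hlim
  exact hlim

lemma IsAlmostAdditive.abs_inv_mul_sub_mul_le {d : ℕ} {a : ℕ → ℝ} (ha : IsAlmostAdditive d a)
    {m n : ℕ} (hmn : m ≤ n) :
    |((2 * (n : ℝ)) ^ d)⁻¹ * a n - (1 / (2 * m + 1)) ^ d * a m| ≤ tilingError d m n := by
  set r : ℝ := (2 * tileRadius m n + 1) / (2 * n) with hr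
  have hrescaled : |((2 * (n : ℝ)) ^ d)⁻¹ * a n - r ^ d * a m| ≤
      ((4 * n + 1) / (2 * n)) ^ d - (r * (4 * m + 1)) ^ d := by
    have hlhs : ((2 * (n : ℝ)) ^ d)⁻¹ * a n - r ^ d * a m =
        (a n - (2 * tileRadius m n + 1) ^ d * a m) / (2 * n) ^ d := by
      rw [hr, div_pow]
      ring
    have hrhs : ((4 * n + 1 : ℝ) / (2 * n)) ^ d - (r * (4 * m + 1)) ^ d =
        ((4 * n + 1) ^ d - ((2 * tileRadius m n + 1) * (4 * m + 1)) ^ d) / (2 * n) ^ d := by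
      rw [hr, div_mul_eq_mul_div, div_pow, div_pow, sub_div]
    rw [hlhs, hrhs, abs_div, abs_of_nonneg (by positivity : 0 ≤ (2 * (n : ℝ)) ^ d)]
    exact div_le_div_of_nonneg_right (ha.abs_apply_sub_le (tileRadius_spec hmn).1)
      (by positivity)
  have hcoeff : |r ^ d * a m - (1 / (2 * m + 1)) ^ d * a m| ≤
      |r ^ d - (1 / (2 * m + 1)) ^ d| * (4 * m + 1) ^ d := by
    rw [← sub_mul, abs_mul]
    exact mul_le_mul_of_nonneg_left (ha.abs_apply_le m) (abs_nonneg _)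
  exact (abs_sub_le _ _ _).trans (add_le_add hrescaled hcoeff)

lemma tendstoUniformly_limsup_of_isAlmostAdditive {α : Type*} {d : ℕ} {a : ℕ → α → ℝ}
    (ha : ∀ t, IsAlmostAdditive d (a · t)) :
    TendstoUniformly (fun (n : ℕ) t => ((2 * (n : ℝ)) ^ d)⁻¹ * a n t)
      (fun t => limsup (fun n : ℕ => ((2 * (n : ℝ)) ^ d)⁻¹ * a n t) atTop) atTop := by
  refine tendstoUniformly_limsup_of_forall_exists_near fun ε hε => ?_
  have hlimit : Tendsto (fun m : ℕ => (2 : ℝ) ^ d - (1 / (2 * m + 1) * (4 * m + 1)) ^ d) atTop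
      (𝓝 0) := by
    rw [← sub_self ((2 : ℝ) ^ d)]
    exact (tendsto_one_div_mul_four_mul_add_one.pow d).const_sub (2 ^ d)
  obtain ⟨m, hm⟩ := (hlimit.eventually_lt_const hε).exists
  refine ⟨fun t => (1 / (2 * m + 1)) ^ d * a m t, ?_⟩
  filter_upwards [(tendsto_tilingError d m).eventually_lt_const hm, eventually_ge_atTop m]
    with n hn hmn t
  exact ((ha t).abs_inv_mul_sub_mul_le hmn).trans_lt hn

end UniformLimit

lemma isAlmostAdditive_integral_bettiN {d : ℕ} (q : ℕ) {P : Measure (Config d)}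
    [IsProbabilityMeasure P] (hP : Stationary P) (t : ℝ) :
    IsAlmostAdditive d fun n => ∫ ω, (bettiN d q n t ω : ℝ) ∂P where
  abs_apply_le n := norm_integral_bettiN_le q n t
  abs_apply_sub_le h := norm_integral_bettiN_sub_mul_le q hP h t

theorem uniform_convergence_expected_betti_general (d q : ℕ) (P : Measure (Config d))
    [IsProbabilityMeasure P] (hstat : Stationary P) :
    TendstoUniformly
      (fun (n : ℕ) (t : ℝ) => ((2 * (n : ℝ)) ^ d)⁻¹ * ∫ ω, (bettiN d q n t ω : ℝ) ∂P)
      (betaHat d q P) atTop :=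
  tendstoUniformly_limsup_of_isAlmostAdditive fun t => isAlmostAdditive_integral_bettiN q hstat t

/-- Fix `0 ≤ q < d` and let `P` be a stationary and ergodic probability
measure on `Ω = [0,1]^{K^d}` whose marginal distribution functions
`F^Q(t) = P(ω_Q ≤ t)` are continuous on `[0,1]` for every elementary cube `Q`. Then the
functions `t ↦ |Λ_n|⁻¹ E[β_q^n(t)]` converge uniformly on `[0,1]` to
`β̂_q(t) = limsup_{n→∞} |Λ_n|⁻¹ E[β_q^n(t)]`. -/
theorem uniform_convergence_expected_betti (d q : ℕ) (hq : q < d)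
    (P : Measure (Config d)) [IsProbabilityMeasure P]
    (hstat : Stationary P) (herg : ErgodicConfig P)
    (hcont : ∀ Q : ElemCube d,
      ContinuousOn (fun t : ℝ => (P {ω : Config d | (ω Q : ℝ) ≤ t}).toReal)
        (Set.Icc (0 : ℝ) 1)) :
    TendstoUniformlyOn
      (fun (n : ℕ) (t : ℝ) => ((2 * (n : ℝ)) ^ d)⁻¹ * ∫ ω, (bettiN d q n t ω : ℝ) ∂P)
      (fun t => betaHat d q P t) atTop (Set.Icc (0 : ℝ) 1) := by
  exact (uniform_convergence_expected_betti_general d q P hstat).tendstoUniformlyOn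

end
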